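/- Let M be a topological space and let C be a quasipoint of the lattice B(M) of Borel subsets of M. Then C contains a quasipoint of the lattice T(M) of open subsets of M (i.e. there exists a quasipoint B of T(M) with B ⊆ C, and in that case B = C ∩ T(M)) if and only if for every open U ⊆ M the boundary ∂U = cl(U) ∩ cl(M \ U) does not belong to C. -/

import Mathlib

/-!
In a Heyting algebra a filter base is maximal exactly when it contains `a` or `aᶜ` for every `a`.
The pseudocomplement of an open set `U` is its exterior, so the filter base `C ∩ T(M)` is maximal
iff `C` contains, for every open `U`, either `U` or the exterior of `U`. Since `C` is prime, this
says that `C` contains their union, which is the complement of `∂U`.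
-/

/-- A filter base in an ordered set `L` with least element `⊥`:
a nonempty subset not containing `⊥` in which any two elements have a common lower bound. -/
def IsFilterBase {L : Type*} [PartialOrder L] [OrderBot L] (B : Set L) : Prop :=
  B.Nonempty ∧ ⊥ ∉ B ∧ ∀ a ∈ B, ∀ b ∈ B, ∃ c ∈ B, c ≤ a ∧ c ≤ b

/-- A quasipoint is a maximal filter base. -/
def IsQuasipoint {L : Type*} [PartialOrder L] [OrderBot L] (B : Set L) : Prop :=
  IsFilterBase B ∧ ∀ C : Set L, IsFilterBase C → B ⊆ C → C = B

/-- The set of quasipoints of `L`. -/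
def Quasipoint (L : Type*) [PartialOrder L] [OrderBot L] : Type _ :=
  {B : Set L // IsQuasipoint B}

/-- The basic (cl)open set of the Stone spectrum determined by `a : L`. -/
def Qset {L : Type*} [PartialOrder L] [OrderBot L] (a : L) : Set (Quasipoint L) :=
  {B | a ∈ B.1}

/-- The Stone topology on the set of quasipoints, generated by the sets `Qset a`. -/
instance {L : Type*} [PartialOrder L] [OrderBot L] : TopologicalSpace (Quasipoint L) :=
  TopologicalSpace.generateFrom (Set.range (Qset : L → Set (Quasipoint L)))

open TopologicalSpace

/-- The lattice of Borel subsets of `M`, ordered by inclusion. -/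
def BorelSet (M : Type*) [MeasurableSpace M] : Type _ :=
  {A : Set M // MeasurableSet A}

instance {M : Type*} [MeasurableSpace M] : PartialOrder (BorelSet M) :=
  inferInstanceAs (PartialOrder {A : Set M // MeasurableSet A})

instance {M : Type*} [MeasurableSpace M] : OrderBot (BorelSet M) where
  bot := ⟨∅, MeasurableSet.empty⟩
  bot_le A := show (∅ : Set M) ⊆ A.1 from Set.empty_subset _

/-- An open set, as a Borel set. -/
def Opens.toBorel {M : Type*} [TopologicalSpace M] [MeasurableSpace M] [BorelSpace M]
    (U : Opens M) : BorelSet M :=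
  ⟨(U : Set M), U.2.measurableSet⟩

namespace IsFilterBase

section PartialOrder

variable {L : Type*} [PartialOrder L] [OrderBot L] {B : Set L}

theorem not_disjoint (hB : IsFilterBase B) {a b : L} (ha : a ∈ B) (hb : b ∈ B) :
    ¬Disjoint a b := by
  intro hab
  obtain ⟨c, hc, hca, hcb⟩ := hB.2.2 a ha b hb
  exact hB.2.1 (le_bot_iff.1 (hab hca hcb) ▸ hc)

theorem upperClosure (hB : IsFilterBase B) : IsFilterBase (upperClosure B : Set L) := by
  refine ⟨hB.1.mono subset_upperClosure, ?_, ?_⟩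
  · rintro ⟨b, hb, hb_bot⟩
    exact hB.2.1 (le_bot_iff.1 hb_bot ▸ hb)
  · rintro x ⟨a, ha, hax⟩ y ⟨b, hb, hby⟩
    obtain ⟨c, hc, hca, hcb⟩ := hB.2.2 a ha b hb
    exact ⟨c, subset_upperClosure hc, hca.trans hax, hcb.trans hby⟩

end PartialOrder

theorem image_inf_left {L : Type*} [SemilatticeInf L] [OrderBot L] {B : Set L}
    (hB : IsFilterBase B) {a : L} (h : ∀ b ∈ B, ¬Disjoint a b) :
    IsFilterBase ((a ⊓ ·) '' B) := by
  refine ⟨hB.1.image _, ?_, ?_⟩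
  · rintro ⟨b, hb, hab⟩
    exact h b hb (disjoint_iff.2 hab)
  · rintro _ ⟨b, hb, rfl⟩ _ ⟨c, hc, rfl⟩
    obtain ⟨d, hd, hdb, hdc⟩ := hB.2.2 b hb c hc
    exact ⟨a ⊓ d, Set.mem_image_of_mem _ hd, inf_le_inf_left a hdb, inf_le_inf_left a hdc⟩

theorem isQuasipoint_of_mem_or_compl_mem {L : Type*} [HeytingAlgebra L] {B : Set L}
    (hB : IsFilterBase B) (h : ∀ a, a ∈ B ∨ aᶜ ∈ B) : IsQuasipoint B := by
  refine ⟨hB, fun D hD hBD => Set.Subset.antisymm (fun a ha => ?_) hBD⟩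
  exact (h a).resolve_right fun ha' => hD.not_disjoint ha (hBD ha') disjoint_compl_right

end IsFilterBase

namespace IsQuasipoint

theorem mem_of_le {L : Type*} [PartialOrder L] [OrderBot L] {B : Set L} (hB : IsQuasipoint B)
    {a b : L} (ha : a ∈ B) (hab : a ≤ b) : b ∈ B := by
  rw [← hB.2 _ hB.1.upperClosure subset_upperClosure]
  exact ⟨a, ha, hab⟩

theorem top_mem {L : Type*} [PartialOrder L] [BoundedOrder L] {B : Set L}
    (hB : IsQuasipoint B) : ⊤ ∈ B :=
  let ⟨_, hb⟩ := hB.1.1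
  hB.mem_of_le hb le_top

section SemilatticeInf

variable {L : Type*} [SemilatticeInf L] [OrderBot L] {B : Set L}

theorem inf_mem (hB : IsQuasipoint B) {a b : L} (ha : a ∈ B) (hb : b ∈ B) : a ⊓ b ∈ B :=
  let ⟨_, hc, hca, hcb⟩ := hB.1.2.2 a ha b hb
  hB.mem_of_le hc (le_inf hca hcb)

theorem mem_of_forall_not_disjoint (hB : IsQuasipoint B) {a : L}
    (h : ∀ b ∈ B, ¬Disjoint a b) : a ∈ B := by
  have hsub : B ⊆ upperClosure ((a ⊓ ·) '' B) := fun b hb =>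
    ⟨a ⊓ b, Set.mem_image_of_mem _ hb, inf_le_right⟩
  rw [← hB.2 _ (hB.1.image_inf_left h).upperClosure hsub]
  obtain ⟨b, hb⟩ := hB.1.1
  exact ⟨a ⊓ b, Set.mem_image_of_mem _ hb, inf_le_left⟩

end SemilatticeInf

section HeytingAlgebra

variable {L : Type*} [HeytingAlgebra L] {B : Set L}

theorem compl_mem_iff (hB : IsQuasipoint B) {a : L} : aᶜ ∈ B ↔ a ∉ B := by
  refine ⟨fun ha' ha => hB.1.not_disjoint ha ha' disjoint_compl_right, fun ha => ?_⟩
  obtain ⟨b, hb, hab⟩ : ∃ b ∈ B, Disjoint a b := by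
    by_contra! h
    exact ha (hB.mem_of_forall_not_disjoint h)
  exact hB.mem_of_le hb hab.le_compl_left

theorem sup_mem_iff (hB : IsQuasipoint B) {a b : L} : a ⊔ b ∈ B ↔ a ∈ B ∨ b ∈ B := by
  refine ⟨fun hab => ?_, ?_⟩
  · by_contra! h
    have h_compl : (a ⊔ b)ᶜ ∈ B := by
      rw [compl_sup]
      exact hB.inf_mem (hB.compl_mem_iff.2 h.1) (hB.compl_mem_iff.2 h.2)
    exact hB.compl_mem_iff.1 h_compl hab
  · rintro (ha | hb)
    · exact hB.mem_of_le ha le_sup_left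
    · exact hB.mem_of_le hb le_sup_right

end HeytingAlgebra

theorem isFilterBase_preimage {K L : Type*} [SemilatticeInf K] [BoundedOrder K]
    [SemilatticeInf L] [BoundedOrder L] {C : Set L} (hC : IsQuasipoint C) (f : InfTopHom K L)
    (hf : f ⊥ = ⊥) : IsFilterBase (f ⁻¹' C) := by
  refine ⟨⟨⊤, ?_⟩, ?_, fun a ha b hb => ⟨a ⊓ b, ?_, inf_le_left, inf_le_right⟩⟩
  · rw [Set.mem_preimage, map_top]
    exact hC.top_mem
  · rw [Set.mem_preimage, hf]
    exact hC.1.2.1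
  · rw [Set.mem_preimage, map_inf]
    exact hC.inf_mem ha hb

theorem isQuasipoint_preimage_iff {K L : Type*} [HeytingAlgebra K] [HeytingAlgebra L]
    {C : Set L} (hC : IsQuasipoint C) (f : InfTopHom K L) (hf : f ⊥ = ⊥) :
    IsQuasipoint (f ⁻¹' C) ↔ ∀ a, (f a ⊔ f aᶜ)ᶜ ∉ C := by
  simp only [hC.compl_mem_iff, not_not, hC.sup_mem_iff]
  refine ⟨fun h a => ?_, (hC.isFilterBase_preimage f hf).isQuasipoint_of_mem_or_compl_mem⟩
  exact or_iff_not_imp_left.2 h.compl_mem_iff.2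

end IsQuasipoint

theorem borel_quasipoint_contains_open_quasipoint_iff_general {K L : Type*} [HeytingAlgebra K]
    [HeytingAlgebra L] (f : InfTopHom K L) (hf : f ⊥ = ⊥) {C : Set L} (hC : IsQuasipoint C) :
    ((∃ B, IsQuasipoint B ∧ B ⊆ f ⁻¹' C) ↔ ∀ a, (f a ⊔ f aᶜ)ᶜ ∉ C) ∧
      ∀ B, IsQuasipoint B → B ⊆ f ⁻¹' C → B = f ⁻¹' C := by
  have eq_preimage (B : Set K) (hB : IsQuasipoint B) (hBC : B ⊆ f ⁻¹' C) : B = f ⁻¹' C :=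
    (hB.2 _ (hC.isFilterBase_preimage f hf) hBC).symm
  refine ⟨?_, eq_preimage⟩
  rw [← hC.isQuasipoint_preimage_iff f hf]
  refine ⟨?_, fun h => ⟨_, h, subset_rfl⟩⟩
  rintro ⟨B, hB, hBC⟩
  exact eq_preimage B hB hBC ▸ hB

namespace BorelSet

noncomputable instance {M : Type*} [MeasurableSpace M] : BooleanAlgebra (BorelSet M) :=
  inferInstanceAs (BooleanAlgebra {A : Set M // MeasurableSet A})

variable {M : Type*} [TopologicalSpace M] [MeasurableSpace M] [BorelSpace M]

/-- The inclusion `T(M) → B(M)` as a homomorphism of meet-semilattices with top. It does not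
preserve pseudocomplements, which are exteriors in `T(M)` and complements in `B(M)`. -/
def ofOpens : InfTopHom (Opens M) (BorelSet M) where
  toFun := Opens.toBorel
  map_inf' _ _ := rfl
  map_top' := rfl

theorem boundary_eq_compl_sup_compl (U : Opens M) :
    (⟨closure (U : Set M) ∩ closure ((U : Set M)ᶜ),
      (isClosed_closure.inter isClosed_closure).measurableSet⟩ : BorelSet M) =
      (ofOpens U ⊔ ofOpens Uᶜ)ᶜ := by
  apply Subtype.ext
  change closure (U : Set M) ∩ closure (U : Set M)ᶜ = ((U : Set M) ∪ (Uᶜ : Opens M))ᶜ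
  rw [Opens.coe_compl_eq_interior_compl, interior_compl, Set.compl_union, compl_compl,
    U.isOpen.isClosed_compl.closure_eq, Set.inter_comm]

end BorelSet

/-- Let `C` be a quasipoint of the lattice of Borel subsets of a topological space `M`. Then `C`
contains a quasipoint of the lattice of open subsets of `M` — in which case that quasipoint is
`C ∩ T(M)` — if and only if no boundary `∂U = cl U ∩ cl (M \ U)` of an open set `U` belongs
to `C`. -/
theorem borel_quasipoint_contains_open_quasipoint_iff {M : Type*} [TopologicalSpace M]
    [MeasurableSpace M] [BorelSpace M] (C : Set (BorelSet M)) (hC : IsQuasipoint C) :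
    ((∃ B : Set (Opens M), IsQuasipoint B ∧ ∀ U ∈ B, Opens.toBorel U ∈ C) ↔
      ∀ U : Opens M,
        (⟨closure (U : Set M) ∩ closure ((U : Set M)ᶜ),
          (isClosed_closure.inter isClosed_closure).measurableSet⟩ : BorelSet M) ∉ C) ∧
    (∀ B : Set (Opens M), IsQuasipoint B → (∀ U ∈ B, Opens.toBorel U ∈ C) →
      B = {U : Opens M | Opens.toBorel U ∈ C}) := by
  simp only [BorelSet.boundary_eq_compl_sup_compl]
  exact borel_quasipoint_contains_open_quasipoint_iff_general BorelSet.ofOpens rfl hC
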